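/- If g(x,y) := (1/2)[f(x,y) + f(y,x)] for x,y ∈ [−π,π], then μ_f = μ_g; i.e., the limiting spectral distribution is unchanged when the spectral density is replaced by its symmetrization in the two coordinates. -/

import Mathlib

open MeasureTheory ProbabilityTheory Filter Real

noncomputable section

/-- The square `(-π, π]²` on which the spectral measure lives. -/
def specBox : Set (ℝ × ℝ) := Set.Ioc (-π) π ×ˢ Set.Ioc (-π) π

/-- `(1/N) ∑_j g(λ_j(A))`, the integral of `g` against the empirical spectral
distribution of a symmetric `N × N` real matrix `A` (junk value `0` if `A` is
not symmetric). -/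
def esdEval {N : ℕ} (A : Matrix (Fin N) (Fin N) ℝ) (g : ℝ → ℝ) : ℝ :=
  if hA : A.IsHermitian then (N : ℝ)⁻¹ * ∑ j, g (hA.eigenvalues j) else 0

/-- The (random) empirical spectral distributions of `A N` converge weakly in
probability to the probability measure `μ`: for every bounded continuous `g`,
`∫ g d(ESD(A N)) → ∫ g dμ` in probability. -/
def ESDTendstoInProb {Ω : Type*} [MeasurableSpace Ω] (P : Measure Ω)
    (A : (N : ℕ) → Ω → Matrix (Fin N) (Fin N) ℝ) (μ : Measure ℝ) : Prop :=
  ∀ g : ℝ → ℝ, Continuous g → (∃ C, ∀ x, |g x| ≤ C) →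
    ∀ ε > 0, Tendsto (fun N => P {ω | ε ≤ |esdEval (A N ω) g - ∫ x, g x ∂μ|})
      atTop (nhds 0)

/-- The symmetric matrix `W_N/√N`, where `W_N(i,j) = X_{i,j} + X_{j,i}`,
`1 ≤ i,j ≤ N`. -/
def scaledW {Ω : Type*} (X : ℤ → ℤ → Ω → ℝ) (N : ℕ) (ω : Ω) :
    Matrix (Fin N) (Fin N) ℝ :=
  fun i j => (Real.sqrt N)⁻¹ *
    (X ((i : ℕ) + 1) ((j : ℕ) + 1) ω + X ((j : ℕ) + 1) ((i : ℕ) + 1) ω)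

/-- A centered stationary Gaussian process indexed by `ℤ²` with positive
variance: every finite real linear combination is a centered Gaussian random
variable, and second moments are shift invariant. -/
structure StatGauss {Ω : Type*} [MeasurableSpace Ω] (P : Measure Ω)
    (X : ℤ → ℤ → Ω → ℝ) : Prop where
  meas : ∀ j k, Measurable (X j k)
  gauss : ∀ c : (ℤ × ℤ) →₀ ℝ, ∃ v : NNReal,
    P.map (fun ω => ∑ p ∈ c.support, c p * X p.1 p.2 ω) = gaussianReal 0 v
  var_pos : 0 < ∫ ω, (X 0 0 ω) ^ 2 ∂P
  stat : ∀ j k u v : ℤ,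
    ∫ ω, X j k ω * X (j + u) (k + v) ω ∂P = ∫ ω, X 0 0 ω * X u v ω ∂P

/-- The spectral measure `ν` of the process `X` (from the Herglotz
representation), together with the standing assumption of the paper:
`ν = ν_ac + ν_d`, where `ν_ac` is absolutely continuous with respect to
Lebesgue measure with density `f ≥ 0` and `ν_d = νd` is discrete (supported on
a countable set). -/
structure SpectralDecomp {Ω : Type*} [MeasurableSpace Ω] (P : Measure Ω)
    (X : ℤ → ℤ → Ω → ℝ) (ν νd : Measure (ℝ × ℝ)) (f : ℝ × ℝ → ℝ) : Prop where
  finite : IsFiniteMeasure ν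
  support : ν specBoxᶜ = 0
  herglotz : ∀ u v : ℤ,
    (∫ q, Complex.exp (Complex.I * ((u * q.1 + v * q.2 : ℝ) : ℂ)) ∂ν)
      = ((∫ ω, X 0 0 ω * X u v ω ∂P : ℝ) : ℂ)
  f_nonneg : ∀ q, 0 ≤ f q
  f_meas : Measurable f
  discrete : ∃ s : Set (ℝ × ℝ), s.Countable ∧ νd sᶜ = 0
  decomp : ν = (volume.restrict specBox).withDensity
      (fun q => ENNReal.ofReal (f q)) + νd

/-- The process `X` has absolutely continuous spectral measure with density
`h` on `(-π,π]²`: `E[X_{0,0} X_{u,v}] = ∫∫ e^{i(ux+vy)} h(x,y) dx dy`. -/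
def HasSpecDensity {Ω : Type*} [MeasurableSpace Ω] (P : Measure Ω)
    (X : ℤ → ℤ → Ω → ℝ) (h : ℝ × ℝ → ℝ) : Prop :=
  ∀ u v : ℤ,
    (∫ q in specBox,
        Complex.exp (Complex.I * ((u * q.1 + v * q.2 : ℝ) : ℂ)) * ((h q : ℝ) : ℂ))
      = ((∫ ω, X 0 0 ω * X u v ω ∂P : ℝ) : ℂ)

/-- `μ` is the limiting spectral distribution of the matrices `W_N/√N` built
from some centered stationary Gaussian process whose spectral measure is
absolutely continuous with density `h`. -/
def IsLSDofDensity (h : ℝ × ℝ → ℝ) (μ : Measure ℝ) : Prop :=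
  ∃ (Ω : Type) (_ : MeasurableSpace Ω) (P : Measure Ω),
    IsProbabilityMeasure P ∧ ∃ X : ℤ → ℤ → Ω → ℝ,
      StatGauss P X ∧ HasSpecDensity P X h ∧ ESDTendstoInProb P (scaledW X) μ

/-!
The Cayley transform `x ↦ (x + i) / (x - i)` is an injection of `ℝ` into the unit circle, so a
finite measure on `ℝ` is determined by the integrals of its powers. For an empirical spectral
distribution these integrals are the normalized traces of powers of a unitary matrix; they change
by at most `2 k rank(A - B) / N` and by at most `2 k ‖A - B‖_HS / √N` when the symmetric `N × N`
matrix `A` is replaced by `B`.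

The covariance of `W_N` depends on the covariance function `R` only through `R(u,v) + R(v,u)`.
Averaging over this swap averages the spectral density, so `W_N` has the covariance of the matrix
built from a process with the symmetrized density, plus a contribution of the discrete part `ν_d`.
For Gaussian entries such a sum of covariances is realized by adding an independent Gaussian matrix.
Finitely many atoms of `ν_d` account for matrices of bounded rank, and the remaining ones for a
matrix of small Hilbert-Schmidt norm relative to `√N`, so the expected normalized traces have the
same limit.
-/

section Cayley
variable {A : Type*}

/-- The Cayley transform `(a + i)(a - i)⁻¹`, in the form that involves the resolvent of `a` once;
its value is `1` when `a - i` is not invertible. -/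
def cayley [Ring A] [Algebra ℂ A] (a : A) : A :=
  1 - (2 * Complex.I) • resolvent a Complex.I

variable [Ring A] [Algebra ℂ A]

lemma cayley_sub_cayley {a b : A} (ha : Complex.I ∈ resolventSet ℂ a)
    (hb : Complex.I ∈ resolventSet ℂ b) :
    cayley b - cayley a =
      (2 * Complex.I) • (resolvent a Complex.I * (a - b) * resolvent b Complex.I) := by
  rw [← spectrum.resolvent_sub_resolvent ha hb, smul_sub, cayley, cayley]
  abel

lemma cayley_mul_I_sub {a : A} (ha : Complex.I ∈ resolventSet ℂ a) :
    cayley a * (algebraMap ℂ A Complex.I - a) = -(algebraMap ℂ A Complex.I + a) := by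
  rw [cayley, sub_mul, one_mul, smul_mul_assoc, resolvent,
    Ring.inverse_mul_cancel _ (spectrum.mem_resolventSet_iff.mp ha), Algebra.algebraMap_eq_smul_one]
  module

lemma cayley_conj (p : Aˣ) (a : A) : cayley (p * a * ↑p⁻¹) = p * cayley a * ↑p⁻¹ := by
  have hconj : algebraMap ℂ A Complex.I - p * a * ↑p⁻¹
      = p * (algebraMap ℂ A Complex.I - a) * ↑p⁻¹ := by
    rw [mul_sub, sub_mul, ← Algebra.commutes, mul_assoc _ (p : A), p.mul_inv, mul_one]
  rw [cayley, cayley, resolvent, hconj, Ring.inverse_mul (.inr p⁻¹.isUnit),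
    Ring.inverse_mul (.inl p.isUnit), Ring.inverse_unit, Ring.inverse_unit, inv_inv, resolvent]
  simp [mul_sub, sub_mul, mul_assoc]

end Cayley

section CStarAlgebra

variable {A : Type*} [CStarAlgebra A] {a : A}

lemma I_mem_resolventSet_of_isSelfAdjoint (ha : IsSelfAdjoint a) :
    Complex.I ∈ resolventSet ℂ a := by
  by_contra h
  simpa using ha.im_eq_zero_of_mem_spectrum h

lemma cayley_mem_unitary (ha : IsSelfAdjoint a) : cayley a ∈ unitary A := by
  have hI := I_mem_resolventSet_of_isSelfAdjoint ha
  set x := (spectrum.mem_resolventSet_iff.mp hI).unit with hx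
  have hstar : (↑(star x) : A) = -(algebraMap ℂ A Complex.I + a) := by
    simp [hx, ← algebraMap_star_comm, ha.star_eq, sub_eq_add_neg, add_comm]
  have hcay : cayley a = ↑(star x) * (↑x⁻¹ : A) := by
    rw [Units.eq_mul_inv_iff_mul_eq, hstar]
    exact cayley_mul_I_sub hI
  have hnormal : x * star x = star x * x := by
    ext
    have hxval : (x : A) = algebraMap ℂ A Complex.I - a := IsUnit.unit_spec _
    simp only [Units.val_mul, hstar, hxval, sub_mul, mul_sub, neg_mul, mul_neg, add_mul, mul_add,
      Algebra.commutes Complex.I a]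
    abel
  rwa [hcay, Units.mul_inv_mem_unitary, star_star]

lemma norm_le_one_of_mem_unitary {A : Type*} [NormedRing A] [StarRing A] [CStarRing A] {u : A}
    (hu : u ∈ unitary A) : ‖u‖ ≤ 1 := by
  nontriviality A
  exact (CStarRing.norm_of_mem_unitary hu).le

lemma norm_cayley_le_one (ha : IsSelfAdjoint a) : ‖cayley a‖ ≤ 1 :=
  norm_le_one_of_mem_unitary (cayley_mem_unitary ha)

lemma norm_resolvent_I_le_one (ha : IsSelfAdjoint a) : ‖resolvent a Complex.I‖ ≤ 1 := by
  nontriviality A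
  have h : (2 * Complex.I) • resolvent a Complex.I = 1 - cayley a := by simp [cayley]
  have hdouble : 2 * ‖resolvent a Complex.I‖ ≤ 1 + 1 :=
    calc 2 * ‖resolvent a Complex.I‖ = ‖1 - cayley a‖ := by rw [← h, norm_smul]; simp
      _ ≤ ‖(1 : A)‖ + ‖cayley a‖ := norm_sub_le _ _
      _ ≤ 1 + 1 := by gcongr; exacts [CStarRing.norm_one.le, norm_cayley_le_one ha]
  linarith

end CStarAlgebra

section Trace
open scoped Matrix.Norms.L2Operator

lemma norm_trace_le_finrank_range_mul_norm {𝕜 E : Type*} [RCLike 𝕜] [NormedAddCommGroup E]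
    [InnerProductSpace 𝕜 E] [FiniteDimensional 𝕜 E] (T : E →L[𝕜] E) :
    ‖LinearMap.trace 𝕜 E T‖ ≤ Module.finrank 𝕜 T.range * ‖T‖ := by
  set b := stdOrthonormalBasis 𝕜 T.range
  rw [← LinearMap.trace_restrict_eq_of_forall_mem T.range (T : E →ₗ[𝕜] E) fun x => ⟨x, rfl⟩,
    LinearMap.trace_eq_sum_inner _ b]
  refine (norm_sum_le_of_le (n := fun _ => ‖T‖) _ fun i _ => ?_).trans (by simp)
  calc _ ≤ ‖b i‖ * ‖T (b i)‖ := norm_inner_le_norm _ _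
    _ ≤ 1 * (‖T‖ * 1) := by
      gcongr
      · exact (b.norm_eq_one i).le
      · exact T.le_opNorm_of_le (b.norm_eq_one i).le
    _ = ‖T‖ := by ring

variable {n : Type*} [Fintype n] [DecidableEq n]

lemma norm_trace_le_rank_mul_norm (M : Matrix n n ℂ) : ‖M.trace‖ ≤ M.rank * ‖M‖ := by
  have h := norm_trace_le_finrank_range_mul_norm (Matrix.toEuclideanCLM (n := n) (𝕜 := ℂ) M)
  rwa [Matrix.coe_toEuclideanCLM_eq_toEuclideanLin, Matrix.toEuclideanLin, Matrix.toLpLin_eq_toLin,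
    Matrix.trace_toLin_eq, ← Matrix.rank_eq_finrank_range_toLin] at h

/-- The trace norm of `D`, as the norm dual to the operator norm under the trace pairing. -/
def traceNorm (D : Matrix n n ℂ) : ℝ :=
  ‖LinearMap.toContinuousLinearMap (Matrix.traceLinearMap n ℂ ℂ ∘ₗ LinearMap.mulRight ℂ D)‖

lemma norm_trace_mul_le (V D : Matrix n n ℂ) : ‖(V * D).trace‖ ≤ traceNorm D * ‖V‖ :=
  ContinuousLinearMap.le_opNorm
    (LinearMap.toContinuousLinearMap (Matrix.traceLinearMap n ℂ ℂ ∘ₗ LinearMap.mulRight ℂ D)) V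

lemma traceNorm_nonneg (D : Matrix n n ℂ) : 0 ≤ traceNorm D := norm_nonneg _

lemma traceNorm_le {D : Matrix n n ℂ} {c : ℝ} (hc : 0 ≤ c)
    (h : ∀ V : Matrix n n ℂ, ‖(V * D).trace‖ ≤ c * ‖V‖) : traceNorm D ≤ c :=
  ContinuousLinearMap.opNorm_le_bound _ hc h

lemma traceNorm_add_le (D E : Matrix n n ℂ) : traceNorm (D + E) ≤ traceNorm D + traceNorm E := by
  refine traceNorm_le (add_nonneg (traceNorm_nonneg D) (traceNorm_nonneg E)) fun V => ?_
  rw [mul_add, Matrix.trace_add, add_mul]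
  exact norm_add_le_of_le (norm_trace_mul_le V D) (norm_trace_mul_le V E)

lemma traceNorm_smul_le (z : ℂ) (D : Matrix n n ℂ) : traceNorm (z • D) ≤ ‖z‖ * traceNorm D := by
  refine traceNorm_le (mul_nonneg (norm_nonneg z) (traceNorm_nonneg D)) fun V => ?_
  rw [Matrix.mul_smul, Matrix.trace_smul, norm_smul, mul_assoc]
  gcongr
  exact norm_trace_mul_le V D

lemma traceNorm_mul_left_le (U D : Matrix n n ℂ) : traceNorm (U * D) ≤ ‖U‖ * traceNorm D := by
  refine traceNorm_le (mul_nonneg (norm_nonneg U) (traceNorm_nonneg D)) fun V => ?_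
  calc ‖(V * (U * D)).trace‖ = ‖(V * U * D).trace‖ := by rw [mul_assoc]
    _ ≤ traceNorm D * (‖V‖ * ‖U‖) :=
      (norm_trace_mul_le _ _).trans
        (mul_le_mul_of_nonneg_left (norm_mul_le V U) (traceNorm_nonneg D))
    _ = ‖U‖ * traceNorm D * ‖V‖ := by ring

lemma traceNorm_mul_right_le (D W : Matrix n n ℂ) : traceNorm (D * W) ≤ traceNorm D * ‖W‖ := by
  refine traceNorm_le (mul_nonneg (traceNorm_nonneg D) (norm_nonneg W)) fun V => ?_
  calc ‖(V * (D * W)).trace‖ = ‖(W * V * D).trace‖ := by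
        rw [← mul_assoc, Matrix.trace_mul_comm, mul_assoc]
    _ ≤ traceNorm D * (‖W‖ * ‖V‖) :=
      (norm_trace_mul_le _ _).trans
        (mul_le_mul_of_nonneg_left (norm_mul_le W V) (traceNorm_nonneg D))
    _ = traceNorm D * ‖W‖ * ‖V‖ := by ring

lemma traceNorm_le_rank_mul_norm (D : Matrix n n ℂ) : traceNorm D ≤ D.rank * ‖D‖ := by
  refine traceNorm_le (by positivity) fun V => ?_
  calc ‖(V * D).trace‖ ≤ (V * D).rank * ‖V * D‖ := norm_trace_le_rank_mul_norm _
    _ ≤ D.rank * (‖V‖ * ‖D‖) := by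
      gcongr
      exacts [Matrix.rank_mul_le_right V D, norm_mul_le V D]
    _ = D.rank * ‖D‖ * ‖V‖ := by ring

lemma traceNorm_le_sqrt_card_mul_sqrt_sum_sq (D : Matrix n n ℂ) :
    traceNorm D ≤ √(Fintype.card n) * √(∑ j, ∑ i, ‖D i j‖ ^ 2) := by
  refine traceNorm_le (by positivity) fun V => ?_
  have hdiag (j : n) : ‖(V * D) j j‖ ≤ ‖V‖ * √(∑ i, ‖D i j‖ ^ 2) := by
    let col : EuclideanSpace ℂ n := WithLp.toLp 2 fun i => D i j
    calc ‖(V * D) j j‖ ≤ ‖(WithLp.toLp 2 (V.mulVec col) : EuclideanSpace ℂ n)‖ :=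
          PiLp.norm_apply_le (WithLp.toLp 2 (V.mulVec col) : EuclideanSpace ℂ n) j
      _ ≤ ‖V‖ * ‖col‖ := V.l2_opNorm_mulVec col
      _ = ‖V‖ * √(∑ i, ‖D i j‖ ^ 2) := by rw [EuclideanSpace.norm_eq]
  have hcauchy := Real.sum_mul_le_sqrt_mul_sqrt Finset.univ (fun _ : n => (1 : ℝ))
    fun j => √(∑ i, ‖D i j‖ ^ 2)
  have hsq (j : n) : √(∑ i, ‖D i j‖ ^ 2) ^ 2 = ∑ i, ‖D i j‖ ^ 2 := Real.sq_sqrt (by positivity)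
  simp only [one_mul, one_pow, Finset.sum_const, Finset.card_univ, nsmul_eq_mul, mul_one, hsq]
    at hcauchy
  calc ‖(V * D).trace‖ ≤ ∑ j, ‖V‖ * √(∑ i, ‖D i j‖ ^ 2) := norm_sum_le_of_le _ fun j _ => hdiag j
    _ = ‖V‖ * ∑ j, √(∑ i, ‖D i j‖ ^ 2) := by rw [Finset.mul_sum]
    _ ≤ ‖V‖ * (√(Fintype.card n) * √(∑ j, ∑ i, ‖D i j‖ ^ 2)) := by gcongr
    _ = _ := mul_comm _ _

lemma traceNorm_pow_sub_pow_le {U W : Matrix n n ℂ} (hU : U ∈ unitary (Matrix n n ℂ))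
    (hW : W ∈ unitary (Matrix n n ℂ)) (k : ℕ) :
    traceNorm (U ^ k - W ^ k) ≤ k * traceNorm (U - W) := by
  induction k with
  | zero => simp [traceNorm]
  | succ k ih =>
    have hUW := traceNorm_nonneg (U - W)
    have htelescope : U ^ (k + 1) - W ^ (k + 1) = U ^ k * (U - W) + (U ^ k - W ^ k) * W := by
      rw [pow_succ, pow_succ]; noncomm_ring
    calc traceNorm (U ^ (k + 1) - W ^ (k + 1))
        ≤ ‖U ^ k‖ * traceNorm (U - W) + traceNorm (U ^ k - W ^ k) * ‖W‖ := by
          rw [htelescope]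
          exact (traceNorm_add_le _ _).trans
            (add_le_add (traceNorm_mul_left_le _ _) (traceNorm_mul_right_le _ _))
      _ ≤ 1 * traceNorm (U - W) + k * traceNorm (U - W) * 1 := by
        gcongr
        exacts [norm_le_one_of_mem_unitary (pow_mem hU k), norm_le_one_of_mem_unitary hW]
      _ = (k + 1 : ℕ) * traceNorm (U - W) := by push_cast; ring

end Trace

section CayleyMoment
open scoped Matrix.Norms.L2Operator

variable {n : Type*}

lemma isSelfAdjoint_map_ofReal {A : Matrix n n ℝ} (hA : A.IsSymm) :
    IsSelfAdjoint (A.map Complex.ofRealHom) := by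
  ext i j
  simp [Matrix.star_apply, hA.apply]

lemma rank_smul_le {R m : Type*} [CommSemiring R] [StrongRankCondition R] [Finite m] [Fintype n]
    (c : R) (D : Matrix m n R) : (c • D).rank ≤ D.rank := by
  classical
  have := Fintype.ofFinite m
  simpa using Matrix.rank_mul_le_right (c • (1 : Matrix m m R)) D

variable [Fintype n] [DecidableEq n]

lemma norm_trace_le_traceNorm (D : Matrix n n ℂ) : ‖D.trace‖ ≤ traceNorm D :=
  calc ‖D.trace‖ = ‖(1 * D).trace‖ := by rw [one_mul]
    _ ≤ traceNorm D * ‖(1 : Matrix n n ℂ)‖ := norm_trace_mul_le 1 D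
    _ ≤ traceNorm D * 1 :=
      mul_le_mul_of_nonneg_left (norm_le_one_of_mem_unitary (one_mem _)) (traceNorm_nonneg D)
    _ = traceNorm D := mul_one _

lemma traceNorm_cayley_sub_le {A B : Matrix n n ℂ} (hA : IsSelfAdjoint A) (hB : IsSelfAdjoint B) :
    traceNorm (cayley B - cayley A) ≤ 2 * traceNorm (A - B) := by
  have hAB := traceNorm_nonneg (A - B)
  rw [cayley_sub_cayley (I_mem_resolventSet_of_isSelfAdjoint hA)
    (I_mem_resolventSet_of_isSelfAdjoint hB)]
  calc _ ≤ ‖2 * Complex.I‖ * (‖resolvent A Complex.I‖ * traceNorm (A - B) *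
        ‖resolvent B Complex.I‖) := by
        refine (traceNorm_smul_le _ _).trans ?_
        gcongr
        refine (traceNorm_mul_right_le _ _).trans ?_
        gcongr
        exact traceNorm_mul_left_le _ _
    _ ≤ 2 * (1 * traceNorm (A - B) * 1) := by
        gcongr
        exacts [by simp, norm_resolvent_I_le_one hA, norm_resolvent_I_le_one hB]
    _ = 2 * traceNorm (A - B) := by ring

lemma traceNorm_cayley_sub_le_rank {A B : Matrix n n ℂ} (hA : IsSelfAdjoint A)
    (hB : IsSelfAdjoint B) : traceNorm (cayley B - cayley A) ≤ 2 * (A - B).rank := by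
  have hrank : (cayley B - cayley A).rank ≤ (A - B).rank := by
    rw [cayley_sub_cayley (I_mem_resolventSet_of_isSelfAdjoint hA)
      (I_mem_resolventSet_of_isSelfAdjoint hB)]
    exact (rank_smul_le _ _).trans
      ((Matrix.rank_mul_le_left _ _).trans (Matrix.rank_mul_le_right _ _))
  have hnorm : ‖cayley B - cayley A‖ ≤ 2 :=
    (norm_sub_le_of_le (norm_cayley_le_one hB) (norm_cayley_le_one hA)).trans_eq one_add_one_eq_two
  calc _ ≤ (cayley B - cayley A).rank * ‖cayley B - cayley A‖ := traceNorm_le_rank_mul_norm _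
    _ ≤ (A - B).rank * 2 := by gcongr
    _ = 2 * (A - B).rank := mul_comm _ _

/-- The normalized trace of the `k`-th power of the Cayley transform of a real matrix `A`. For
symmetric `A` this is the integral of `((x + i) / (x - i)) ^ k` against the empirical spectral
distribution of `A`. -/
def cayleyMoment (k : ℕ) (A : Matrix n n ℝ) : ℂ :=
  (Fintype.card n : ℂ)⁻¹ * (cayley (A.map Complex.ofRealHom) ^ k).trace

lemma norm_cayleyMoment_sub_le_traceNorm {A B : Matrix n n ℝ} (hA : A.IsSymm) (hB : B.IsSymm)
    (k : ℕ) : ‖cayleyMoment k B - cayleyMoment k A‖ ≤ (Fintype.card n : ℝ)⁻¹ *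
      (k * traceNorm (cayley (B.map Complex.ofRealHom) - cayley (A.map Complex.ofRealHom))) := by
  rw [cayleyMoment, cayleyMoment, ← mul_sub, ← Matrix.trace_sub, norm_mul, norm_inv,
    Complex.norm_natCast]
  gcongr
  exact (norm_trace_le_traceNorm _).trans <|
    traceNorm_pow_sub_pow_le (cayley_mem_unitary (isSelfAdjoint_map_ofReal hB))
      (cayley_mem_unitary (isSelfAdjoint_map_ofReal hA)) k

lemma norm_cayleyMoment_sub_le_rank {A B : Matrix n n ℝ} (hA : A.IsSymm) (hB : B.IsSymm)
    (k : ℕ) : ‖cayleyMoment k B - cayleyMoment k A‖ ≤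
      2 * k * ((A - B).map Complex.ofRealHom).rank / Fintype.card n := by
  calc _ ≤ (Fintype.card n : ℝ)⁻¹ * (k * (2 * ((A - B).map Complex.ofRealHom).rank)) := by
        refine (norm_cayleyMoment_sub_le_traceNorm hA hB k).trans ?_
        gcongr
        rw [Matrix.map_sub _ (map_sub _)]
        exact traceNorm_cayley_sub_le_rank (isSelfAdjoint_map_ofReal hA)
          (isSelfAdjoint_map_ofReal hB)
    _ = _ := by ring

lemma norm_cayleyMoment_sub_le_sqrt_sum_sq {A B : Matrix n n ℝ} (hA : A.IsSymm) (hB : B.IsSymm)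
    (k : ℕ) : ‖cayleyMoment k B - cayleyMoment k A‖ ≤
      2 * k / √(Fintype.card n) * √(∑ j, ∑ i, (A - B) i j ^ 2) := by
  calc _ ≤ (Fintype.card n : ℝ)⁻¹ *
        (k * (2 * (√(Fintype.card n) * √(∑ j, ∑ i, (A - B) i j ^ 2)))) := by
        refine (norm_cayleyMoment_sub_le_traceNorm hA hB k).trans ?_
        gcongr
        refine (traceNorm_cayley_sub_le (isSelfAdjoint_map_ofReal hA)
          (isSelfAdjoint_map_ofReal hB)).trans ?_
        rw [← Matrix.map_sub _ (map_sub _)]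
        gcongr
        simpa [← Complex.ofReal_sub] using
          traceNorm_le_sqrt_card_mul_sqrt_sum_sq ((A - B).map Complex.ofRealHom)
    _ = 2 * k * (√(Fintype.card n) / Fintype.card n) * √(∑ j, ∑ i, (A - B) i j ^ 2) := by ring
    _ = _ := by rw [Real.sqrt_div_self, div_eq_mul_inv]

lemma norm_cayleyMoment_le_one {A : Matrix n n ℝ} (hA : A.IsSymm) (k : ℕ) :
    ‖cayleyMoment k A‖ ≤ 1 := by
  have hU := norm_le_one_of_mem_unitary
    (pow_mem (cayley_mem_unitary (isSelfAdjoint_map_ofReal hA)) k)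
  have htrace : ‖(cayley (A.map Complex.ofRealHom) ^ k).trace‖ ≤ Fintype.card n :=
    calc _ ≤ (Matrix.rank (cayley (A.map Complex.ofRealHom) ^ k)) *
          ‖cayley (A.map Complex.ofRealHom) ^ k‖ := norm_trace_le_rank_mul_norm _
      _ ≤ Fintype.card n * 1 := by
        gcongr
        exact Matrix.rank_le_card_width _
      _ = Fintype.card n := mul_one _
  rw [cayleyMoment, norm_mul, norm_inv, Complex.norm_natCast]
  exact inv_mul_le_one_of_le₀ htrace (by positivity)

lemma cayley_diagonal (d : n → ℝ) :
    cayley (Matrix.diagonal fun j => (d j : ℂ)) = Matrix.diagonal fun j => cayley (d j : ℂ) := by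
  have hd : IsSelfAdjoint (Matrix.diagonal fun j => (d j : ℂ)) :=
    Matrix.isHermitian_diagonal_of_self_adjoint _ (funext fun j => Complex.conj_ofReal (d j))
  have hI := I_mem_resolventSet_of_isSelfAdjoint hd
  refine (spectrum.mem_resolventSet_iff.mp hI).mul_right_cancel ?_
  rw [cayley_mul_I_sub hI, Matrix.algebraMap_eq_diagonal, Matrix.diagonal_sub,
    Matrix.diagonal_mul_diagonal, Matrix.diagonal_add, Matrix.diagonal_neg]
  congr 1 with j
  have hj : IsSelfAdjoint (d j : ℂ) := Complex.conj_ofReal (d j)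
  exact (cayley_mul_I_sub (I_mem_resolventSet_of_isSelfAdjoint hj)).symm

lemma cayleyMoment_eq_sum_eigenvalues (k : ℕ) {A : Matrix n n ℝ} (hA : A.IsHermitian) :
    cayleyMoment k A = (Fintype.card n : ℂ)⁻¹ * ∑ j, cayley (hA.eigenvalues j : ℂ) ^ k := by
  let p : (Matrix n n ℂ)ˣ :=
    Units.map (Complex.ofRealHom.mapMatrix : Matrix n n ℝ →+* Matrix n n ℂ)
      (Unitary.toUnits hA.eigenvectorUnitary)
  have hspec : A.map Complex.ofRealHom =
      (p : Matrix n n ℂ) * Matrix.diagonal (fun j => (hA.eigenvalues j : ℂ)) *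
        (↑p⁻¹ : Matrix n n ℂ) := by
    have hinv : (↑p⁻¹ : Matrix n n ℂ) =
        (star (hA.eigenvectorUnitary : Matrix n n ℝ)).map Complex.ofRealHom := rfl
    have h := congrArg Complex.ofRealHom.mapMatrix hA.spectral_theorem
    rw [Unitary.conjStarAlgAut_apply, map_mul, map_mul] at h
    rw [hinv]
    simpa [p, Matrix.diagonal_map, Function.comp_def] using h
  rw [cayleyMoment, hspec, cayley_conj, cayley_diagonal, Units.conj_pow, Matrix.trace_units_conj,
    Matrix.diagonal_pow, Matrix.trace_diagonal]
  rfl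

end CayleyMoment

section Convergence
open scoped BoundedContinuousFunction

lemma ext_of_integral_pow_eq {E : Type*} [MeasurableSpace E] [PseudoEMetricSpace E] [BorelSpace E]
    [CompleteSpace E] [SecondCountableTopology E] {μ ν : Measure E} [IsFiniteMeasure μ]
    [IsFiniteMeasure ν] {u : E →ᵇ ℂ} (hu : u ∈ unitary (E →ᵇ ℂ)) (hinj : Function.Injective u)
    (h : ∀ k : ℕ, ∫ x, u x ^ k ∂μ = ∫ x, u x ^ k ∂ν) : μ = ν := by
  have hstar (k : ℕ) : ∫ x, (star u ^ k) x ∂μ = ∫ x, (star u ^ k) x ∂ν := by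
    simpa [← integral_conj] using congrArg (starRingEnd ℂ) (h k)
  have hmonomial (m n : ℕ) : ∫ x, (u ^ m * star u ^ n) x ∂μ = ∫ x, (u ^ m * star u ^ n) x ∂ν := by
    obtain ⟨d, rfl⟩ | ⟨d, rfl⟩ := (le_total n m).imp Nat.exists_eq_add_of_le Nat.exists_eq_add_of_le
    · rw [pow_add, mul_right_comm, ← mul_pow, Unitary.mul_star_self_of_mem hu, one_pow, one_mul]
      exact h d
    · rw [pow_add, ← mul_assoc, ← mul_pow, Unitary.mul_star_self_of_mem hu, one_pow, one_mul]
      exact hstar d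
  refine ext_of_forall_mem_subalgebra_integral_eq_of_pseudoEMetric_complete_countable
    (𝕜 := ℂ) (A := StarAlgebra.adjoin ℂ {u}) (fun x y hxy => ?_) fun g hg => ?_
  · exact ⟨u, ⟨u, ⟨u, StarAlgebra.self_mem_adjoin_singleton ℂ u, rfl⟩, rfl⟩, hinj.ne hxy⟩
  · rw [← StarSubalgebra.mem_toSubalgebra, StarAlgebra.adjoin_toSubalgebra,
      ← Subalgebra.mem_toSubmodule, Algebra.adjoin_eq_span, Set.star_singleton,
      Set.singleton_union] at hg
    induction hg using Submodule.span_induction with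
    | mem g hg =>
      obtain ⟨m, n, rfl⟩ := (Submonoid.mem_closure_pair _ _ _).mp hg
      exact hmonomial m n
    | zero => simp
    | add g₁ g₂ _ _ ih₁ ih₂ =>
      simp only [BoundedContinuousFunction.coe_add, Pi.add_apply]
      rw [integral_add (g₁.integrable μ) (g₂.integrable μ),
        integral_add (g₁.integrable ν) (g₂.integrable ν), ih₁, ih₂]
    | smul c g _ ih =>
      simp only [BoundedContinuousFunction.coe_smul, integral_smul, ih]

lemma norm_cayley_ofReal (x : ℝ) : ‖cayley (x : ℂ)‖ = 1 :=
  CStarRing.norm_of_mem_unitary (cayley_mem_unitary (Complex.conj_ofReal x))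

lemma I_sub_ofReal_ne_zero (x : ℝ) : Complex.I - x ≠ 0 :=
  (spectrum.mem_resolventSet_iff.mp
    (I_mem_resolventSet_of_isSelfAdjoint (Complex.conj_ofReal x))).ne_zero

lemma cayley_eq_one_sub_mul_inv (z : ℂ) :
    cayley z = 1 - 2 * Complex.I * (Complex.I - z)⁻¹ := by
  simp [cayley, resolvent]

/-- The Cayley transform of the real line, as a bounded continuous function. -/
def cayleyBCF : ℝ →ᵇ ℂ :=
  .ofNormedAddCommGroup (fun x => cayley (x : ℂ))
    (by
      simp only [cayley_eq_one_sub_mul_inv]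
      exact continuous_const.sub (continuous_const.mul
        ((continuous_const.sub Complex.continuous_ofReal).inv₀ I_sub_ofReal_ne_zero)))
    1 fun x => (norm_cayley_ofReal x).le

lemma cayleyBCF_apply (x : ℝ) : cayleyBCF x = cayley (x : ℂ) := rfl

lemma cayleyBCF_mem_unitary : cayleyBCF ∈ unitary (ℝ →ᵇ ℂ) := by
  refine Unitary.mem_iff.mpr ⟨?_, ?_⟩ <;> ext x
  exacts [Unitary.star_mul_self_of_mem (cayley_mem_unitary (Complex.conj_ofReal x)),
    Unitary.mul_star_self_of_mem (cayley_mem_unitary (Complex.conj_ofReal x))]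

lemma cayleyBCF_injective : Function.Injective cayleyBCF := by
  intro x y h
  simpa [cayleyBCF_apply, cayley_eq_one_sub_mul_inv] using h

lemma tendsto_integral_of_tendstoInMeasure {Ω E : Type*} [MeasurableSpace Ω] {P : Measure Ω}
    [IsProbabilityMeasure P] [NormedAddCommGroup E] [NormedSpace ℝ E] [CompleteSpace E]
    {F : ℕ → Ω → E} {c : E} {C : ℝ}
    (hF : ∀ n, AEStronglyMeasurable (F n) P) (hC : ∀ n ω, ‖F n ω‖ ≤ C)
    (h : TendstoInMeasure P F atTop fun _ => c) :
    Tendsto (fun n => ∫ ω, F n ω ∂P) atTop (nhds c) := by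
  refine tendsto_of_subseq_tendsto fun ns hns => ?_
  obtain ⟨ms, -, hms⟩ := (h.comp hns).exists_seq_tendsto_ae
  refine ⟨ms, ?_⟩
  simpa using tendsto_integral_of_dominated_convergence (fun _ => C) (fun n => hF (ns (ms n)))
    (integrable_const C) (fun n => .of_forall (hC _)) hms

lemma tendstoInMeasure_of_re_im {Ω : Type*} [MeasurableSpace Ω] {P : Measure Ω} {F : ℕ → Ω → ℂ}
    {c : ℂ} (hre : TendstoInMeasure P (fun n ω => (F n ω).re) atTop fun _ => c.re)
    (him : TendstoInMeasure P (fun n ω => (F n ω).im) atTop fun _ => c.im) :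
    TendstoInMeasure P F atTop fun _ => c := by
  rw [tendstoInMeasure_iff_norm] at *
  intro ε hε
  have hsum := (hre (ε / 2) (half_pos hε)).add (him (ε / 2) (half_pos hε))
  rw [add_zero] at hsum
  refine tendsto_of_tendsto_of_tendsto_of_le_of_le tendsto_const_nhds hsum (fun _ => zero_le) ?_
  refine fun n => (measure_mono fun ω hω => ?_).trans (measure_union_le _ _)
  have hnorm := (Set.mem_ofPred.mp hω).trans (Complex.norm_le_abs_re_add_abs_im _)
  by_contra! hlt
  simp only [Set.mem_union, Set.mem_ofPred_eq, not_or, not_le, Real.norm_eq_abs, ← Complex.sub_re,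
    ← Complex.sub_im] at hlt
  linarith

lemma cayleyMoment_re_eq_esdEval {N : ℕ} {A : Matrix (Fin N) (Fin N) ℝ} (hA : A.IsHermitian)
    (k : ℕ) : (cayleyMoment k A).re = esdEval A fun x => (cayley (x : ℂ) ^ k).re := by
  rw [cayleyMoment_eq_sum_eigenvalues k hA, esdEval, dif_pos hA, Fintype.card_fin,
    ← Complex.ofReal_natCast, ← Complex.ofReal_inv, Complex.re_ofReal_mul, Complex.re_sum]

lemma cayleyMoment_im_eq_esdEval {N : ℕ} {A : Matrix (Fin N) (Fin N) ℝ} (hA : A.IsHermitian)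
    (k : ℕ) : (cayleyMoment k A).im = esdEval A fun x => (cayley (x : ℂ) ^ k).im := by
  rw [cayleyMoment_eq_sum_eigenvalues k hA, esdEval, dif_pos hA, Fintype.card_fin,
    ← Complex.ofReal_natCast, ← Complex.ofReal_inv, Complex.im_ofReal_mul, Complex.im_sum]

lemma ESDTendstoInProb.tendsto_integral_cayleyMoment {Ω : Type*} [MeasurableSpace Ω]
    {P : Measure Ω} [IsProbabilityMeasure P] {A : (N : ℕ) → Ω → Matrix (Fin N) (Fin N) ℝ}
    {μ : Measure ℝ} [IsProbabilityMeasure μ] (h : ESDTendstoInProb P A μ)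
    (hA : ∀ N ω, (A N ω).IsHermitian) {k : ℕ}
    (hmeas : ∀ N, Measurable fun ω => cayleyMoment k (A N ω)) :
    Tendsto (fun N => ∫ ω, cayleyMoment k (A N ω) ∂P) atTop
      (nhds (∫ x, cayley (x : ℂ) ^ k ∂μ)) := by
  have hint : Integrable (fun x : ℝ => cayley (x : ℂ) ^ k) μ := (cayleyBCF ^ k).integrable μ
  refine tendsto_integral_of_tendstoInMeasure (fun N => (hmeas N).aestronglyMeasurable)
    (C := 1) (fun N ω => norm_cayleyMoment_le_one (hA N ω) k) ?_
  refine tendstoInMeasure_of_re_im ?_ ?_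
  · have hre : ∫ x : ℝ, (cayley (x : ℂ) ^ k).re ∂μ = (∫ x : ℝ, cayley (x : ℂ) ^ k ∂μ).re :=
      integral_re hint
    rw [← hre, tendstoInMeasure_iff_norm]
    simp only [cayleyMoment_re_eq_esdEval (hA _ _), Real.norm_eq_abs]
    exact h _ (Complex.continuous_re.comp (cayleyBCF ^ k).continuous)
      ⟨‖cayleyBCF ^ k‖, fun x => (Complex.abs_re_le_norm _).trans
        ((cayleyBCF ^ k).norm_coe_le_norm x)⟩
  · have him : ∫ x : ℝ, (cayley (x : ℂ) ^ k).im ∂μ = (∫ x : ℝ, cayley (x : ℂ) ^ k ∂μ).im :=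
      integral_im hint
    rw [← him, tendstoInMeasure_iff_norm]
    simp only [cayleyMoment_im_eq_esdEval (hA _ _), Real.norm_eq_abs]
    exact h _ (Complex.continuous_im.comp (cayleyBCF ^ k).continuous)
      ⟨‖cayleyBCF ^ k‖, fun x => (Complex.abs_im_le_norm _).trans
        ((cayleyBCF ^ k).norm_coe_le_norm x)⟩

end Convergence

section SymmPart

variable {n : Type*}

/-- The symmetric part of a matrix whose entries are listed as a vector of `ℝ ^ (n × n)`. -/
def symmPart (y : EuclideanSpace ℝ (n × n)) : Matrix n n ℝ :=
  Matrix.of fun i j => (y (i, j) + y (j, i)) / 2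

lemma isSymm_symmPart (y : EuclideanSpace ℝ (n × n)) : (symmPart y).IsSymm := by
  ext i j
  simp [symmPart, add_comm]

lemma symmPart_add (x y : EuclideanSpace ℝ (n × n)) :
    symmPart (x + y) = symmPart x + symmPart y := by
  ext i j
  simp only [symmPart, Matrix.of_apply, PiLp.add_apply, Matrix.add_apply]
  ring

lemma symmPart_smul (c : ℝ) (y : EuclideanSpace ℝ (n × n)) :
    symmPart (c • y) = c • symmPart y := by
  ext i j
  simp only [symmPart, Matrix.of_apply, PiLp.smul_apply, Matrix.smul_apply, smul_eq_mul]
  ring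

variable [Fintype n]

lemma sum_sq_symmPart_le (y : EuclideanSpace ℝ (n × n)) :
    ∑ j, ∑ i, symmPart y i j ^ 2 ≤ ‖y‖ ^ 2 := by
  have hswap : ∑ j, ∑ i, y (j, i) ^ 2 = ∑ j, ∑ i, y (i, j) ^ 2 := Finset.sum_comm
  calc ∑ j, ∑ i, symmPart y i j ^ 2
      ≤ ∑ j, ∑ i, (y (i, j) ^ 2 / 2 + y (j, i) ^ 2 / 2) := by
        gcongr with j _ i _
        rw [symmPart, Matrix.of_apply]
        linarith [sq_nonneg (y (i, j) - y (j, i))]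
    _ = ∑ j, ∑ i, y (j, i) ^ 2 := by
        simp only [Finset.sum_add_distrib, ← Finset.sum_div, hswap, add_halves]
    _ = ‖y‖ ^ 2 := by rw [EuclideanSpace.real_norm_sq_eq, Fintype.sum_prod_type]

variable [DecidableEq n] (k : ℕ)

lemma norm_cayleyMoment_symmPart_add_sub_le (x y : EuclideanSpace ℝ (n × n)) :
    ‖cayleyMoment k (symmPart (x + y)) - cayleyMoment k (symmPart x)‖ ≤
      2 * k / √(Fintype.card n) * ‖y‖ := by
  have hdiff : symmPart x - symmPart (x + y) = (-1 : ℝ) • symmPart y := by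
    rw [symmPart_add]; module
  refine (norm_cayleyMoment_sub_le_sqrt_sum_sq (isSymm_symmPart _) (isSymm_symmPart _) k).trans ?_
  gcongr
  refine Real.sqrt_le_iff.mpr ⟨norm_nonneg y, ?_⟩
  rw [hdiff]
  simpa using sum_sq_symmPart_le y

lemma norm_cayleyMoment_symmPart_add_smul_sub_le (x v : EuclideanSpace ℝ (n × n)) (c : ℝ) :
    ‖cayleyMoment k (symmPart (x + c • v)) - cayleyMoment k (symmPart x)‖ ≤
      2 * k * ((symmPart v).map Complex.ofRealHom).rank / Fintype.card n := by
  have hdiff : (symmPart x - symmPart (x + c • v)).map Complex.ofRealHom =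
      (-c : ℂ) • (symmPart v).map Complex.ofRealHom := by
    ext i j
    simp [symmPart_add, symmPart_smul]
  refine (norm_cayleyMoment_sub_le_rank (isSymm_symmPart _) (isSymm_symmPart _) k).trans ?_
  rw [hdiff]
  gcongr
  exact rank_smul_le _ _

lemma continuous_cayleyMoment_symmPart :
    Continuous fun y : EuclideanSpace ℝ (n × n) => cayleyMoment k (symmPart y) := by
  refine (LipschitzWith.of_dist_le' (K := 2 * k / √(Fintype.card n)) fun x y => ?_).continuous
  rw [dist_eq_norm, dist_eq_norm]
  simpa using norm_cayleyMoment_symmPart_add_sub_le k y (x - y)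

lemma integrable_cayleyMoment_symmPart (μ : Measure (EuclideanSpace ℝ (n × n)))
    [IsFiniteMeasure μ] : Integrable (fun y => cayleyMoment k (symmPart y)) μ :=
  .of_bound (continuous_cayleyMoment_symmPart k).aestronglyMeasurable 1
    (.of_forall fun y => norm_cayleyMoment_le_one (isSymm_symmPart y) k)

end SymmPart

section SecondMoment
open scoped Matrix

variable {α ι : Type*} [MeasurableSpace α]

/-- The matrix of second moments `∫ Z_p Z_q dμ` of a vector-valued function `Z`; the covariance
matrix when `Z` is centered. -/
def secondMoment (μ : Measure α) (Z : α → EuclideanSpace ℝ ι) : Matrix ι ι ℝ :=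
  Matrix.of fun p q => ∫ a, Z a p * Z a q ∂μ

lemma secondMoment_restrict_singleton [MeasurableSingletonClass α] (μ : Measure α)
    (Z : α → EuclideanSpace ℝ ι) (a : α) :
    secondMoment (μ.restrict {a}) Z =
      Matrix.vecMulVec (√(μ.real {a}) • Z a).ofLp (√(μ.real {a}) • Z a).ofLp := by
  ext p q
  simp only [secondMoment, Matrix.of_apply, Measure.restrict_singleton, integral_smul_measure,
    integral_dirac, Matrix.vecMulVec_apply, PiLp.smul_apply, smul_eq_mul, ← measureReal_def]
  rw [mul_mul_mul_comm, Real.mul_self_sqrt measureReal_nonneg]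

variable [Fintype ι] {μ : Measure α} {Z : α → EuclideanSpace ℝ ι}

lemma integrable_mul_of_memLp_two (hZ : MemLp Z 2 μ) (p q : ι) :
    Integrable (fun a => Z a p * Z a q) μ :=
  (hZ.eval_piLp p).integrable_mul (hZ.eval_piLp q)

lemma dotProduct_secondMoment_mulVec (hZ : MemLp Z 2 μ) (t : EuclideanSpace ℝ ι) :
    t.ofLp ⬝ᵥ secondMoment μ Z *ᵥ t.ofLp = ∫ a, inner ℝ t (Z a) ^ 2 ∂μ := by
  have hsq (a : α) : inner ℝ t (Z a) ^ 2 = ∑ p, ∑ q, t p * (Z a p * Z a q * t q) := by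
    rw [PiLp.inner_apply, sq, Finset.sum_mul_sum]
    simp only [RCLike.inner_apply, conj_trivial]
    congr! 2
    ring
  have hint (p q : ι) : Integrable (fun a => t p * (Z a p * Z a q * t q)) μ :=
    ((integrable_mul_of_memLp_two hZ p q).mul_const (t q)).const_mul (t p)
  simp only [hsq]
  rw [integral_finsetSum _ fun p _ => integrable_finsetSum _ fun q _ => hint p q]
  simp only [integral_finsetSum _ fun q _ => hint _ q, integral_const_mul, integral_mul_const,
    dotProduct, Matrix.mulVec, secondMoment, Matrix.of_apply, Finset.mul_sum]

lemma posSemidef_secondMoment (hZ : MemLp Z 2 μ) : (secondMoment μ Z).PosSemidef := by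
  refine .of_dotProduct_mulVec_nonneg (Matrix.IsHermitian.ext fun p q => ?_) fun x => ?_
  · simp [secondMoment, mul_comm]
  · have h := dotProduct_secondMoment_mulVec hZ (WithLp.toLp 2 x)
    simp only [star_trivial] at h ⊢
    rw [h]
    exact integral_nonneg fun a => sq_nonneg _

lemma trace_secondMoment (hZ : MemLp Z 2 μ) : (secondMoment μ Z).trace = ∫ a, ‖Z a‖ ^ 2 ∂μ := by
  simp only [Matrix.trace, secondMoment, Matrix.diag_apply, Matrix.of_apply,
    EuclideanSpace.real_norm_sq_eq, ← pow_two]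
  rw [integral_finsetSum _ fun p _ => (hZ.eval_piLp p).integrable_sq]

lemma secondMoment_add_measure {ν : Measure α} (hμ : MemLp Z 2 μ) (hν : MemLp Z 2 ν) :
    secondMoment (μ + ν) Z = secondMoment μ Z + secondMoment ν Z := by
  ext p q
  exact integral_add_measure (integrable_mul_of_memLp_two hμ p q)
    (integrable_mul_of_memLp_two hν p q)

end SecondMoment

section Gaussian

variable {ι : Type*} [Fintype ι] [DecidableEq ι]

lemma memLp_of_map_eq_gaussianReal {Ω : Type*} [MeasurableSpace Ω] {P : Measure Ω} {f : Ω → ℝ}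
    (hf : AEMeasurable f P) {m : ℝ} {v : NNReal} (h : P.map f = gaussianReal m v) (p : NNReal) :
    MemLp f p P :=
  (memLp_map_measure_iff aestronglyMeasurable_id hf).mp (h ▸ memLp_id_gaussianReal p)

lemma integral_sq_of_map_eq_gaussianReal {Ω : Type*} [MeasurableSpace Ω] {P : Measure Ω}
    {f : Ω → ℝ} (hf : AEMeasurable f P) {v : NNReal} (h : P.map f = gaussianReal 0 v) :
    ∫ ω, f ω ^ 2 ∂P = v := by
  have hvar := variance_eq_integral (X := id) (μ := gaussianReal 0 v) aemeasurable_id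
  rw [variance_id_gaussianReal] at hvar
  simp only [id_eq, integral_id_gaussianReal, sub_zero] at hvar
  rw [hvar, ← h, integral_map hf (by fun_prop)]

lemma map_eq_multivariateGaussian {Ω : Type*} [MeasurableSpace Ω] {P : Measure Ω}
    [IsProbabilityMeasure P] {Z : Ω → EuclideanSpace ℝ ι} (hZ : Measurable Z)
    (hgauss : ∀ t, ∃ v : NNReal, P.map (fun ω => inner ℝ t (Z ω)) = gaussianReal 0 v) :
    P.map Z = multivariateGaussian 0 (secondMoment P Z) := by
  have hinner (t : EuclideanSpace ℝ ι) : Measurable fun ω => inner ℝ t (Z ω) :=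
    hZ.const_inner
  have hZ2 : MemLp Z 2 P := by
    refine .of_eval_piLp fun p => ?_
    obtain ⟨v, hv⟩ := hgauss (EuclideanSpace.single p 1)
    simpa [EuclideanSpace.inner_single_left] using
      memLp_of_map_eq_gaussianReal (hinner _).aemeasurable hv 2
  have := Measure.isProbabilityMeasure_map (μ := P) hZ.aemeasurable
  refine Measure.ext_of_charFun (funext fun t => ?_)
  obtain ⟨v, hv⟩ := hgauss t
  have hmap : (P.map Z).map (InnerProductSpace.toDualMap ℝ (EuclideanSpace ℝ ι) t) =
      gaussianReal 0 v := by
    rw [← hv, Measure.map_map (by fun_prop) hZ]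
    rfl
  rw [charFun_eq_charFunDual_toDualMap, charFunDual_eq_charFun_map_one, hmap, charFun_gaussianReal,
    charFun_multivariateGaussian (posSemidef_secondMoment hZ2),
    dotProduct_secondMoment_mulVec hZ2,
    integral_sq_of_map_eq_gaussianReal (hinner t).aemeasurable hv]
  simp

open scoped MeasureTheory in
lemma multivariateGaussian_conv {S T : Matrix ι ι ℝ} (hS : S.PosSemidef) (hT : T.PosSemidef)
    (x y : EuclideanSpace ℝ ι) :
    multivariateGaussian x S ∗ multivariateGaussian y T = multivariateGaussian (x + y) (S + T) := by
  refine Measure.ext_of_charFun (funext fun t => ?_)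
  rw [charFun_conv, charFun_multivariateGaussian hS, charFun_multivariateGaussian hT,
    charFun_multivariateGaussian (hS.add hT), ← Complex.exp_add, inner_add_right,
    Matrix.add_mulVec, dotProduct_add]
  push_cast
  ring_nf

lemma multivariateGaussian_vecMulVec (v : EuclideanSpace ℝ ι) :
    multivariateGaussian 0 (Matrix.vecMulVec v.ofLp v.ofLp) =
      (gaussianReal 0 1).map fun ξ => ξ • v := by
  have hsq : ∫ ξ, ξ ^ 2 ∂gaussianReal 0 1 = 1 :=
    mod_cast integral_sq_of_map_eq_gaussianReal aemeasurable_id (v := 1) Measure.map_id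
  have hmoment : secondMoment (gaussianReal 0 1) (fun ξ : ℝ => ξ • v) =
      Matrix.vecMulVec v.ofLp v.ofLp := by
    ext p q
    simp only [secondMoment, Matrix.of_apply, PiLp.smul_apply, smul_eq_mul, mul_mul_mul_comm,
      ← pow_two, integral_mul_const, hsq, one_mul, Matrix.vecMulVec_apply]
  rw [← hmoment]
  refine (map_eq_multivariateGaussian (by fun_prop) fun t =>
    ⟨.mk (inner ℝ t v ^ 2) (sq_nonneg _), ?_⟩).symm
  simpa [real_inner_smul_right] using gaussianReal_map_mul_const (μ := 0) (v := 1) (inner ℝ t v)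

end Gaussian

section GaussianPerturbation
open scoped MeasureTheory

lemma norm_integral_conv_sub_le {M E : Type*} [AddMonoid M] [MeasurableSpace M] [MeasurableAdd₂ M]
    [NormedAddCommGroup E] [NormedSpace ℝ E] {μ ν : Measure M} [IsProbabilityMeasure μ]
    [IsProbabilityMeasure ν] {φ : M → E} {b : M → ℝ} (hφ : Integrable φ μ)
    (hφconv : Integrable φ (μ ∗ ν)) (hb : Integrable b ν)
    (h : ∀ᵐ y ∂ν, ∀ x, ‖φ (x + y) - φ x‖ ≤ b y) :
    ‖∫ z, φ z ∂(μ ∗ ν) - ∫ x, φ x ∂μ‖ ≤ ∫ y, b y ∂ν := by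
  have hadd : AEMeasurable (fun p : M × M => p.1 + p.2) (μ.prod ν) := by fun_prop
  have hfst : ∫ p, φ p.1 ∂μ.prod ν = ∫ x, φ x ∂μ := by simp [integral_fun_fst]
  have hsnd : ∫ p, b p.2 ∂μ.prod ν = ∫ y, b y ∂ν := by simp [integral_fun_snd]
  have hint : Integrable (fun p => φ (p.1 + p.2)) (μ.prod ν) := hφconv.comp_aemeasurable hadd
  rw [Measure.conv, integral_map hadd hφconv.aestronglyMeasurable, ← hfst, ← hsnd,
    ← integral_sub hint (hφ.comp_fst ν)]
  refine norm_integral_le_of_norm_le (hb.comp_snd μ) ?_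
  filter_upwards [Measure.quasiMeasurePreserving_snd.ae h] with p hp using hp p.1

variable {n : Type*} [Fintype n] [DecidableEq n] (k : ℕ)

/-- The expected Cayley moment of the symmetric part of a centered Gaussian random matrix whose
entries have covariance `S`. -/
def gaussianCayleyMoment (S : Matrix (n × n) (n × n) ℝ) : ℂ :=
  ∫ y, cayleyMoment k (symmPart y) ∂multivariateGaussian 0 S

variable {S T : Matrix (n × n) (n × n) ℝ}

lemma norm_gaussianCayleyMoment_add_sub_le (hS : S.PosSemidef) (hT : T.PosSemidef)
    {b : EuclideanSpace ℝ (n × n) → ℝ} (hb : Integrable b (multivariateGaussian 0 T))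
    (h : ∀ᵐ y ∂multivariateGaussian 0 T, ∀ x,
      ‖cayleyMoment k (symmPart (x + y)) - cayleyMoment k (symmPart x)‖ ≤ b y) :
    ‖gaussianCayleyMoment k (S + T) - gaussianCayleyMoment k S‖ ≤
      ∫ y, b y ∂multivariateGaussian 0 T := by
  have hconv := multivariateGaussian_conv hS hT 0 0
  rw [add_zero] at hconv
  rw [gaussianCayleyMoment, gaussianCayleyMoment, ← hconv]
  exact norm_integral_conv_sub_le (integrable_cayleyMoment_symmPart k _)
    (integrable_cayleyMoment_symmPart k _) hb h

lemma secondMoment_multivariateGaussian {ι : Type*} [Fintype ι] [DecidableEq ι] {T : Matrix ι ι ℝ}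
    (hT : T.PosSemidef) : secondMoment (multivariateGaussian 0 T) (fun y => y) = T := by
  have hmem : MemLp (fun y : EuclideanSpace ℝ ι => y) 2 (multivariateGaussian 0 T) :=
    IsGaussian.memLp_two_id
  have hmean (p : ι) : ∫ y : EuclideanSpace ℝ ι, y p ∂multivariateGaussian 0 T = 0 := by
    rw [← eval_integral_piLp fun q => (hmem.integrable one_le_two).eval_piLp q]
    simp
  ext p q
  rw [← covariance_eval_multivariateGaussian (μ := 0) hT p q, covariance_eq_sub, hmean, zero_mul,
    sub_zero]
  · rfl
  · exact hmem.eval_piLp p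
  · exact hmem.eval_piLp q

lemma integral_norm_multivariateGaussian_le {ι : Type*} [Fintype ι] [DecidableEq ι]
    {T : Matrix ι ι ℝ} (hT : T.PosSemidef) :
    ∫ y, ‖y‖ ∂multivariateGaussian 0 T ≤ √T.trace := by
  have hmem : MemLp (fun y : EuclideanSpace ℝ ι => y) 2 (multivariateGaussian 0 T) :=
    IsGaussian.memLp_two_id
  have hvar := variance_eq_sub hmem.norm
  have hsq : ∫ y, ‖y‖ ^ 2 ∂multivariateGaussian 0 T = T.trace := by
    rw [← trace_secondMoment hmem, secondMoment_multivariateGaussian hT]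
  refine Real.le_sqrt_of_sq_le ?_
  have hnonneg := variance_nonneg (fun y : EuclideanSpace ℝ ι => ‖y‖) (multivariateGaussian 0 T)
  simp only [Pi.pow_apply, hsq] at hvar
  linarith

lemma norm_gaussianCayleyMoment_add_sub_le_sqrt_trace (hS : S.PosSemidef) (hT : T.PosSemidef) :
    ‖gaussianCayleyMoment k (S + T) - gaussianCayleyMoment k S‖ ≤
      2 * k / √(Fintype.card n) * √T.trace := by
  have hint : Integrable (fun y : EuclideanSpace ℝ (n × n) => ‖y‖) (multivariateGaussian 0 T) :=
    IsGaussian.integrable_id.norm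
  calc _ ≤ ∫ y, 2 * k / √(Fintype.card n) * ‖y‖ ∂multivariateGaussian 0 T :=
        norm_gaussianCayleyMoment_add_sub_le k hS hT (hint.const_mul _)
          (.of_forall fun y x => norm_cayleyMoment_symmPart_add_sub_le k x y)
    _ ≤ 2 * k / √(Fintype.card n) * √T.trace := by
      rw [integral_const_mul]
      gcongr
      exact integral_norm_multivariateGaussian_le hT

lemma norm_gaussianCayleyMoment_add_vecMulVec_sub_le (hS : S.PosSemidef)
    (v : EuclideanSpace ℝ (n × n)) :
    ‖gaussianCayleyMoment k (S + Matrix.vecMulVec v.ofLp v.ofLp) - gaussianCayleyMoment k S‖ ≤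
      2 * k * ((symmPart v).map Complex.ofRealHom).rank / Fintype.card n := by
  have hv : (Matrix.vecMulVec v.ofLp v.ofLp).PosSemidef := by
    simpa using Matrix.posSemidef_vecMulVec_self_star v.ofLp
  have hline : ∀ᵐ y ∂multivariateGaussian 0 (Matrix.vecMulVec v.ofLp v.ofLp), y ∈ ℝ ∙ v := by
    rw [multivariateGaussian_vecMulVec]
    refine (ae_map_iff (measurable_id (α := ℝ).smul_const v).aemeasurable
      (ℝ ∙ v).closed_of_finiteDimensional.measurableSet).mpr ?_
    exact .of_forall fun ξ => Submodule.smul_mem _ ξ (Submodule.mem_span_singleton_self v)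
  refine (norm_gaussianCayleyMoment_add_sub_le k hS hv (integrable_const _) ?_).trans_eq
    (by rw [integral_const, probReal_univ, one_smul])
  filter_upwards [hline] with y hy x
  obtain ⟨c, rfl⟩ := Submodule.mem_span_singleton.mp hy
  exact norm_cayleyMoment_symmPart_add_smul_sub_le k x v c

lemma norm_gaussianCayleyMoment_add_secondMoment_restrict_finset_sub_le {α : Type*}
    [MeasurableSpace α] [MeasurableSingletonClass α] {ρ : Measure α}
    {g : α → EuclideanSpace ℝ (n × n)} (hg : MemLp g 2 ρ) {r : ℕ}
    (hr : ∀ a, ((symmPart (g a)).map Complex.ofRealHom).rank ≤ r) (hS : S.PosSemidef)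
    (F : Finset α) :
    ‖gaussianCayleyMoment k (S + secondMoment (ρ.restrict F) g) - gaussianCayleyMoment k S‖ ≤
      F.card * (2 * k * r / Fintype.card n) := by
  classical
  induction F using Finset.induction_on with
  | empty =>
    have hzero : secondMoment (ρ.restrict (∅ : Finset α)) g = 0 := by
      ext p q
      simp [secondMoment]
    rw [hzero, add_zero, sub_self, norm_zero, Finset.card_empty, Nat.cast_zero, zero_mul]
  | insert a F ha ih =>
    set v := √(ρ.real {a}) • g a with hv
    have hrank : ((symmPart v).map Complex.ofRealHom).rank ≤ r := by
      have hmap : (symmPart v).map Complex.ofRealHom =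
          (√(ρ.real {a}) : ℂ) • (symmPart (g a)).map Complex.ofRealHom := by
        ext i j
        simp [hv, symmPart_smul]
      exact hmap ▸ (rank_smul_le _ _).trans (hr a)
    have hsplit : secondMoment (ρ.restrict ↑(insert a F)) g =
        secondMoment (ρ.restrict F) g + Matrix.vecMulVec v.ofLp v.ofLp := by
      rw [← secondMoment_restrict_singleton,
        ← secondMoment_add_measure (hg.restrict _) (hg.restrict _),
        ← Measure.restrict_union (by simpa using ha) (measurableSet_singleton a), Finset.coe_insert,
        Set.insert_eq, Set.union_comm]
    have hstep := norm_gaussianCayleyMoment_add_vecMulVec_sub_le k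
      (hS.add (posSemidef_secondMoment (hg.restrict F))) v
    rw [hsplit, ← add_assoc, Finset.card_insert_of_notMem ha]
    refine (norm_sub_le_norm_sub_add_norm_sub _ _ _).trans ((add_le_add hstep ih).trans ?_)
    push_cast
    rw [add_comm, add_one_mul]
    gcongr

lemma norm_gaussianCayleyMoment_add_secondMoment_sub_le {α : Type*}
    [MeasurableSpace α] [MeasurableSingletonClass α] {ρ : Measure α}
    {g : α → EuclideanSpace ℝ (n × n)} (hg : MemLp g 2 ρ) {r : ℕ}
    (hr : ∀ a, ((symmPart (g a)).map Complex.ofRealHom).rank ≤ r) (hS : S.PosSemidef)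
    (F : Finset α) :
    ‖gaussianCayleyMoment k (S + secondMoment ρ g) - gaussianCayleyMoment k S‖ ≤
      2 * k / √(Fintype.card n) * √(∫ a in (F : Set α)ᶜ, ‖g a‖ ^ 2 ∂ρ) +
        F.card * (2 * k * r / Fintype.card n) := by
  have hsplit : secondMoment ρ g =
      secondMoment (ρ.restrict F) g + secondMoment (ρ.restrict (F : Set α)ᶜ) g := by
    rw [← secondMoment_add_measure (hg.restrict _) (hg.restrict _),
      Measure.restrict_add_restrict_compl F.measurableSet]
  rw [hsplit, ← add_assoc, ← trace_secondMoment (hg.restrict _)]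
  refine (norm_sub_le_norm_sub_add_norm_sub _ _ _).trans (add_le_add
    (norm_gaussianCayleyMoment_add_sub_le_sqrt_trace k ?_ (posSemidef_secondMoment (hg.restrict _)))
    (norm_gaussianCayleyMoment_add_secondMoment_restrict_finset_sub_le k hg hr hS F))
  exact hS.add (posSemidef_secondMoment (hg.restrict _))

lemma tendsto_measureReal_compl_map_subtype {α : Type*} [MeasurableSpace α]
    [MeasurableSingletonClass α] {ρ : Measure α} [IsFiniteMeasure ρ] {s : Set α} (hs : s.Countable)
    (hρ : ρ sᶜ = 0) :
    Tendsto (fun F : Finset s => ρ.real (F.map (.subtype (· ∈ s)) : Set α)ᶜ) atTop (nhds 0) := by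
  have := hs.to_subtype
  have hanti : Antitone fun F : Finset s => (F.map (.subtype (· ∈ s)) : Set α)ᶜ := fun F G h =>
    Set.compl_subset_compl.mpr (Finset.coe_subset.mpr (Finset.map_subset_map.mpr h))
  have hinter : ⋂ F : Finset s, (F.map (.subtype (· ∈ s)) : Set α)ᶜ = sᶜ := by
    rw [← Set.compl_iUnion]
    congr 1
    ext x
    simp only [Set.mem_iUnion, Finset.mem_coe, Finset.mem_map, Function.Embedding.subtype_apply]
    exact ⟨fun ⟨_, a, _, h⟩ => h ▸ a.2, fun hx => ⟨{⟨x, hx⟩}, ⟨x, hx⟩, by simp, rfl⟩⟩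
  have hlim := tendsto_measure_iInter_atTop (μ := ρ)
    (fun F => (F.map (.subtype (· ∈ s))).measurableSet.compl.nullMeasurableSet) hanti
    ⟨∅, measure_ne_top _ _⟩
  rw [hinter, hρ] at hlim
  exact (ENNReal.tendsto_toReal ENNReal.zero_ne_top).comp hlim

lemma tendsto_gaussianCayleyMoment_add_secondMoment_sub {α : Type*}
    [MeasurableSpace α] [MeasurableSingletonClass α] {ρ : Measure α} [IsFiniteMeasure ρ]
    (hρ : ∃ s : Set α, s.Countable ∧ ρ sᶜ = 0) {g : ∀ N, α → EuclideanSpace ℝ (Fin N × Fin N)}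
    (hg : ∀ N, AEStronglyMeasurable (g N) ρ) {B : ℝ} (hB : ∀ N a, ‖g N a‖ ^ 2 ≤ B * N) {r : ℕ}
    (hr : ∀ N a, ((symmPart (g N a)).map Complex.ofRealHom).rank ≤ r)
    {S : ∀ N, Matrix (Fin N × Fin N) (Fin N × Fin N) ℝ} (hS : ∀ N, (S N).PosSemidef) :
    Tendsto (fun N => gaussianCayleyMoment k (S N + secondMoment ρ (g N)) -
      gaussianCayleyMoment k (S N)) atTop (nhds 0) := by
  have hg2 (N : ℕ) : MemLp (g N) 2 ρ :=
    .of_bound (hg N) √(B * N) (.of_forall fun a => Real.le_sqrt_of_sq_le (hB N a))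
  have hrest (N : ℕ) (hN : 0 < N) (s : Set α) :
      2 * k / √N * √(∫ a in s, ‖g N a‖ ^ 2 ∂ρ) ≤ 2 * k * √(B * ρ.real s) := by
    have hint : ∫ a in s, ‖g N a‖ ^ 2 ∂ρ ≤ N * (B * ρ.real s) := by
      refine (integral_mono ((hg2 N).restrict s).norm.integrable_sq
        (integrable_const (B * N)) (hB N)).trans_eq ?_
      rw [integral_const, measureReal_restrict_apply_univ, smul_eq_mul]
      ring
    rw [div_mul_eq_mul_div, div_le_iff₀ (by positivity), mul_assoc _ (√_) (√_),
      ← Real.sqrt_mul' _ N.cast_nonneg, mul_comm (B * _)]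
    gcongr
  obtain ⟨s, hs, hρs⟩ := hρ
  refine NormedAddGroup.tendsto_nhds_zero.mpr fun ε hε => ?_
  have hsmall : Tendsto (fun F : Finset s =>
      2 * k * √(B * ρ.real (F.map (.subtype (· ∈ s)) : Set α)ᶜ)) atTop (nhds 0) := by
    simpa using (((tendsto_measureReal_compl_map_subtype hs hρs).const_mul B).sqrt).const_mul
      (2 * k : ℝ)
  obtain ⟨F, hF⟩ := (hsmall.eventually_lt_const hε).exists
  set F' : Finset α := F.map (.subtype (· ∈ s))
  have hlim : Tendsto (fun N : ℕ => 2 * k * √(B * ρ.real (F' : Set α)ᶜ) +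
      F'.card * (2 * k * r / N)) atTop (nhds (2 * k * √(B * ρ.real (F' : Set α)ᶜ) +
      F'.card * 0)) :=
    ((tendsto_const_div_atTop_nhds_zero_nat _).const_mul _).const_add _
  rw [mul_zero, add_zero] at hlim
  filter_upwards [hlim.eventually_lt_const hF, eventually_gt_atTop 0] with N hNε hN
  have hbound := norm_gaussianCayleyMoment_add_secondMoment_sub_le k (hg2 N) (hr N) (hS N) F'
  rw [Fintype.card_fin] at hbound
  linarith [hrest N hN (F' : Set α)ᶜ]

end GaussianPerturbation

section StationaryCovariance

variable {Ω : Type*} [MeasurableSpace Ω] {P : Measure Ω} {X : ℤ → ℤ → Ω → ℝ}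

/-- The square-integrable family `X` has shift-invariant second moments, given by the function
`R` of the lag. The measure need not be a probability measure. -/
structure HasStationaryCov (P : Measure Ω) (X : ℤ → ℤ → Ω → ℝ) (R : ℤ → ℤ → ℝ) : Prop where
  memLp : ∀ j k, MemLp (X j k) 2 P
  integral_mul : ∀ j k u v, ∫ ω, X j k ω * X (j + u) (k + v) ω ∂P = R u v

/-- The entries of `scaledW X N` as a vector, so that Gaussian measures on `ℝ ^ (N × N)` apply. -/
def scaledWVec {Ω : Type*} (X : ℤ → ℤ → Ω → ℝ) (N : ℕ) (ω : Ω) :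
    EuclideanSpace ℝ (Fin N × Fin N) :=
  WithLp.toLp 2 fun p => scaledW X N ω p.1 p.2

lemma symmPart_scaledWVec {Ω : Type*} (X : ℤ → ℤ → Ω → ℝ) (N : ℕ) (ω : Ω) :
    symmPart (scaledWVec X N ω) = scaledW X N ω := by
  ext i j
  simp only [symmPart, scaledWVec, scaledW, Matrix.of_apply]
  ring

lemma isSymm_scaledW {Ω : Type*} (X : ℤ → ℤ → Ω → ℝ) (N : ℕ) (ω : Ω) : (scaledW X N ω).IsSymm :=
  symmPart_scaledWVec X N ω ▸ isSymm_symmPart _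

lemma measurable_scaledWVec (hX : ∀ j k, Measurable (X j k)) (N : ℕ) :
    Measurable (scaledWVec X N) := by
  refine (WithLp.measurable_toLp 2 _).comp (measurable_pi_lambda _ fun p => ?_)
  exact ((hX _ _).add (hX _ _)).const_mul _

lemma measurable_cayleyMoment_scaledW (hX : ∀ j k, Measurable (X j k)) (k N : ℕ) :
    Measurable fun ω => cayleyMoment k (scaledW X N ω) := by
  simpa only [symmPart_scaledWVec, Function.comp_def] using
    (continuous_cayleyMoment_symmPart k).measurable.comp (measurable_scaledWVec hX N)

namespace HasStationaryCov

variable {R : ℤ → ℤ → ℝ}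

lemma integral_mul_sub (h : HasStationaryCov P X R) (j k j' k' : ℤ) :
    ∫ ω, X j k ω * X j' k' ω ∂P = R (j' - j) (k' - k) := by
  rw [← h.integral_mul j k, add_sub_cancel, add_sub_cancel]

lemma memLp_scaledWVec (h : HasStationaryCov P X R) (N : ℕ) : MemLp (scaledWVec X N) 2 P :=
  .of_eval_piLp fun _ => ((h.memLp _ _).add (h.memLp _ _)).const_mul _

lemma secondMoment_scaledWVec_apply (h : HasStationaryCov P X R) (N : ℕ)
    (p q : Fin N × Fin N) :
    secondMoment P (scaledWVec X N) p q =
      (√N)⁻¹ ^ 2 *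
        (R ((q.1 : ℤ) - p.1) ((q.2 : ℤ) - p.2) + R ((q.2 : ℤ) - p.2) ((q.1 : ℤ) - p.1) +
          (R ((q.2 : ℤ) - p.1) ((q.1 : ℤ) - p.2) + R ((q.1 : ℤ) - p.2) ((q.2 : ℤ) - p.1))) := by
  have hint (j k j' k' : ℤ) : Integrable (fun ω => X j k ω * X j' k' ω) P :=
    (h.memLp j k).integrable_mul (h.memLp j' k')
  have hexpand (ω : Ω) : scaledW X N ω p.1 p.2 * scaledW X N ω q.1 q.2 = (√N)⁻¹ ^ 2 *
      (X (p.1 + 1) (p.2 + 1) ω * X (q.1 + 1) (q.2 + 1) ω +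
        X (p.2 + 1) (p.1 + 1) ω * X (q.2 + 1) (q.1 + 1) ω +
        (X (p.1 + 1) (p.2 + 1) ω * X (q.2 + 1) (q.1 + 1) ω +
          X (p.2 + 1) (p.1 + 1) ω * X (q.1 + 1) (q.2 + 1) ω)) := by
    simp only [scaledW]
    ring
  simp only [secondMoment, Matrix.of_apply, scaledWVec, hexpand]
  rw [integral_const_mul, integral_add ((hint _ _ _ _).fun_add (hint _ _ _ _))
    ((hint _ _ _ _).fun_add (hint _ _ _ _)), integral_add (hint _ _ _ _) (hint _ _ _ _),
    integral_add (hint _ _ _ _) (hint _ _ _ _)]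
  simp only [h.integral_mul_sub, add_sub_add_right_eq_sub]

/-- The symmetrization in `scaledW` only sees the symmetric part `R u v + R v u`. -/
lemma secondMoment_scaledWVec_eq_add {Ω' Ω'' : Type*} [MeasurableSpace Ω'] [MeasurableSpace Ω'']
    {P' : Measure Ω'} {P'' : Measure Ω''} {Y : ℤ → ℤ → Ω' → ℝ} {Z : ℤ → ℤ → Ω'' → ℝ}
    {R' R'' : ℤ → ℤ → ℝ} (hX : HasStationaryCov P X R) (hY : HasStationaryCov P' Y R')
    (hZ : HasStationaryCov P'' Z R'')
    (h : ∀ u v, R u v + R v u = R' u v + R' v u + (R'' u v + R'' v u)) (N : ℕ) :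
    secondMoment P (scaledWVec X N) =
      secondMoment P' (scaledWVec Y N) + secondMoment P'' (scaledWVec Z N) := by
  ext p q
  rw [Matrix.add_apply, hX.secondMoment_scaledWVec_apply, hY.secondMoment_scaledWVec_apply,
    hZ.secondMoment_scaledWVec_apply, h, h]
  ring

end HasStationaryCov

namespace StatGauss

lemma memLp_two (hX : StatGauss P X) (j k : ℤ) : MemLp (X j k) 2 P := by
  obtain ⟨v, hv⟩ := hX.gauss (Finsupp.single (j, k) 1)
  refine memLp_of_map_eq_gaussianReal (hX.meas j k).aemeasurable (v := v) (m := 0) ?_ 2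
  simpa using hv

lemma hasStationaryCov (hX : StatGauss P X) :
    HasStationaryCov P X fun u v => ∫ ω, X 0 0 ω * X u v ω ∂P :=
  ⟨hX.memLp_two, hX.stat⟩

lemma map_scaledWVec [IsProbabilityMeasure P] (hX : StatGauss P X) (N : ℕ) :
    P.map (scaledWVec X N) = multivariateGaussian 0 (secondMoment P (scaledWVec X N)) := by
  refine map_eq_multivariateGaussian (measurable_scaledWVec hX.meas N) fun t => ?_
  set c : (ℤ × ℤ) →₀ ℝ := ∑ p : Fin N × Fin N,
    (Finsupp.single (((p.1 : ℕ) : ℤ) + 1, ((p.2 : ℕ) : ℤ) + 1) ((√N)⁻¹ * t p) +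
      Finsupp.single (((p.2 : ℕ) : ℤ) + 1, ((p.1 : ℕ) : ℤ) + 1) ((√N)⁻¹ * t p)) with hc
  have hinner (ω : Ω) : inner ℝ t (scaledWVec X N ω) = ∑ p ∈ c.support, c p * X p.1 p.2 ω := by
    change _ = Finsupp.linearCombination ℝ (fun p : ℤ × ℤ => X p.1 p.2 ω) c
    simp only [hc, map_sum, map_add, Finsupp.linearCombination_single, PiLp.inner_apply, scaledWVec,
      scaledW, RCLike.inner_apply, conj_trivial, smul_eq_mul]
    congr! 1
    ring
  simpa only [hinner] using hX.gauss c

lemma integral_cayleyMoment_scaledW [IsProbabilityMeasure P] (hX : StatGauss P X) (k N : ℕ) :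
    ∫ ω, cayleyMoment k (scaledW X N ω) ∂P =
      gaussianCayleyMoment k (secondMoment P (scaledWVec X N)) := by
  rw [gaussianCayleyMoment, ← hX.map_scaledWVec N,
    integral_map (measurable_scaledWVec hX.meas N).aemeasurable
      (continuous_cayleyMoment_symmPart k).aestronglyMeasurable]
  simp only [symmPart_scaledWVec]

end StatGauss

end StationaryCovariance

section PhasedCosine

/-- The plane wave of frequency `θ.1` and phase `θ.2`, viewed as a process in `(j, k)` on the space
of frequencies and phases: its second moments realize the covariance of the discrete part. -/
def phasedCosine (j k : ℤ) (θ : (ℝ × ℝ) × ℝ) : ℝ :=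
  cos (j * θ.1.1 + k * θ.1.2 - θ.2)

/-- The measure `ρ` on frequencies, with each frequency taken in the two phases `0` and `π / 2`, so
that `phasedCosine` becomes stationary. -/
def quadraturePhases (ρ : Measure (ℝ × ℝ)) : Measure ((ℝ × ℝ) × ℝ) :=
  ρ.map (fun θ => (θ, 0)) + ρ.map (fun θ => (θ, π / 2))

instance isFiniteMeasure_quadraturePhases (ρ : Measure (ℝ × ℝ)) [IsFiniteMeasure ρ] :
    IsFiniteMeasure (quadraturePhases ρ) := by
  unfold quadraturePhases
  infer_instance

lemma exists_countable_quadraturePhases_compl_eq_zero {ρ : Measure (ℝ × ℝ)}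
    (h : ∃ s : Set (ℝ × ℝ), s.Countable ∧ ρ sᶜ = 0) :
    ∃ s : Set ((ℝ × ℝ) × ℝ), s.Countable ∧ quadraturePhases ρ sᶜ = 0 := by
  obtain ⟨s, hs, hρ⟩ := h
  have hcount : (s ×ˢ ({0, π / 2} : Set ℝ)).Countable := hs.prod (Set.toFinite _).countable
  have hphase {φ : ℝ} (hφ : φ ∈ ({0, π / 2} : Set ℝ)) :
      ρ.map (fun θ => (θ, φ)) (s ×ˢ ({0, π / 2} : Set ℝ))ᶜ = 0 := by
    rw [Measure.map_apply (by fun_prop) hcount.measurableSet.compl]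
    exact measure_mono_null (fun θ hθ hs => hθ ⟨hs, hφ⟩) hρ
  refine ⟨_, hcount, ?_⟩
  rw [quadraturePhases, Measure.add_apply, hphase (by simp), hphase (by simp), add_zero]

lemma continuous_phasedCosine (j k : ℤ) : Continuous (phasedCosine j k) := by
  unfold phasedCosine
  fun_prop

lemma abs_phasedCosine_le_one (j k : ℤ) (θ : (ℝ × ℝ) × ℝ) : |phasedCosine j k θ| ≤ 1 :=
  abs_cos_le_one _

lemma hasStationaryCov_phasedCosine (ρ : Measure (ℝ × ℝ)) [IsFiniteMeasure ρ] :
    HasStationaryCov (quadraturePhases ρ) phasedCosine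
      fun u v => ∫ θ, cos (u * θ.1 + v * θ.2) ∂ρ := by
  have hmem (μ : Measure ((ℝ × ℝ) × ℝ)) [IsFiniteMeasure μ] (j k : ℤ) :
      MemLp (phasedCosine j k) 2 μ :=
    .of_bound (continuous_phasedCosine j k).aestronglyMeasurable 1
      (.of_forall (abs_phasedCosine_le_one j k))
  refine ⟨hmem _, fun j k u v => ?_⟩
  have hint (μ : Measure ((ℝ × ℝ) × ℝ)) [IsFiniteMeasure μ] :
      Integrable (fun θ => phasedCosine j k θ * phasedCosine (j + u) (k + v) θ) μ :=
    (hmem μ j k).integrable_mul (hmem μ _ _)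
  have hphase (φ : ℝ) : Measurable fun θ : ℝ × ℝ => (θ, φ) := by fun_prop
  have hintphase (φ : ℝ) :
      Integrable (fun θ => phasedCosine j k (θ, φ) * phasedCosine (j + u) (k + v) (θ, φ)) ρ :=
    (hint _).comp_measurable (hphase φ)
  rw [quadraturePhases, integral_add_measure (hint _) (hint _),
    integral_map (hphase _).aemeasurable (hint _).aestronglyMeasurable,
    integral_map (hphase _).aemeasurable (hint _).aestronglyMeasurable,
    ← integral_add (hintphase 0) (hintphase (π / 2))]
  refine integral_congr_ae (.of_forall fun θ => ?_)
  have hlag : u * θ.1 + v * θ.2 =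
      ((j + u : ℤ) * θ.1 + (k + v : ℤ) * θ.2) - (j * θ.1 + k * θ.2) := by
    push_cast
    ring
  simp only [phasedCosine, sub_zero, cos_sub_pi_div_two]
  rw [hlag, cos_sub]
  ring

lemma norm_sq_scaledWVec_phasedCosine_le (N : ℕ) (θ : (ℝ × ℝ) × ℝ) :
    ‖scaledWVec phasedCosine N θ‖ ^ 2 ≤ 4 * N := by
  have hentry (p : Fin N × Fin N) : scaledWVec phasedCosine N θ p ^ 2 ≤ (N : ℝ)⁻¹ * 4 := by
    have habs := (abs_add_le (phasedCosine (p.1 + 1) (p.2 + 1) θ)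
      (phasedCosine (p.2 + 1) (p.1 + 1) θ)).trans
      (add_le_add (abs_phasedCosine_le_one _ _ θ) (abs_phasedCosine_le_one _ _ θ))
    simp only [scaledWVec, scaledW, mul_pow, inv_pow, sq_sqrt N.cast_nonneg]
    gcongr
    nlinarith [sq_abs (phasedCosine (p.1 + 1) (p.2 + 1) θ + phasedCosine (p.2 + 1) (p.1 + 1) θ),
      abs_nonneg (phasedCosine (p.1 + 1) (p.2 + 1) θ + phasedCosine (p.2 + 1) (p.1 + 1) θ)]
  rw [EuclideanSpace.real_norm_sq_eq]
  refine (Finset.sum_le_card_nsmul _ _ _ fun p _ => hentry p).trans_eq ?_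
  rcases N.eq_zero_or_pos with rfl | hN
  · simp
  · simp only [Finset.card_univ, Fintype.card_prod, Fintype.card_fin, nsmul_eq_mul, Nat.cast_mul]
    field_simp

lemma rank_scaledW_phasedCosine_le (N : ℕ) (θ : (ℝ × ℝ) × ℝ) :
    ((scaledW phasedCosine N θ).map Complex.ofRealHom).rank ≤ 4 := by
  set a : Fin N → ℝ := fun i => ((i : ℕ) + 1 : ℤ) * θ.1.1
  set b : Fin N → ℝ := fun i => ((i : ℕ) + 1 : ℤ) * θ.1.2 - θ.2
  set U : Matrix (Fin N) (Fin 4) ℝ :=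
    Matrix.of fun i => ![cos (a i), -sin (a i), cos (b i), -sin (b i)]
  set V : Matrix (Fin 4) (Fin N) ℝ :=
    Matrix.of ![fun j => cos (b j), fun j => sin (b j), fun j => cos (a j), fun j => sin (a j)]
  have hwave (i j : Fin N) : phasedCosine (i + 1) (j + 1) θ = cos (a i + b j) := by
    simp only [phasedCosine, a, b]
    congr 1
    ring
  have hfactor : scaledW phasedCosine N θ = (√N)⁻¹ • (U * V) := by
    ext i j
    simp only [scaledW, hwave, cos_add, Matrix.smul_apply, Matrix.mul_apply, Fin.sum_univ_four,
      smul_eq_mul, U, V, Matrix.of_apply, Matrix.cons_val]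
    ring
  rw [hfactor, ← Matrix.smul_mul, Matrix.map_mul]
  exact (Matrix.rank_mul_le_right _ _).trans ((Matrix.rank_le_card_height _).trans_eq (by simp))

end PhasedCosine

section SpectralSide

variable {Ω : Type*} [MeasurableSpace Ω] {P : Measure Ω} {X : ℤ → ℤ → Ω → ℝ}

lemma setIntegral_specBox_comp_swap (h : ℝ × ℝ → ℝ) :
    ∫ q in specBox, h q.swap = ∫ q in specBox, h q := by
  rw [specBox, Measure.volume_eq_prod, ← Measure.prod_restrict]
  exact integral_prod_swap _

lemma integrable_comp_swap_specBox {h : ℝ × ℝ → ℝ} (hh : IntegrableOn h specBox) :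
    IntegrableOn (fun q => h q.swap) specBox := by
  rw [IntegrableOn, specBox, Measure.volume_eq_prod, ← Measure.prod_restrict] at hh ⊢
  exact hh.swap

lemma integrable_character {μ : Measure (ℝ × ℝ)} {h : ℝ × ℝ → ℝ} (hh : Integrable h μ) (u v : ℤ) :
    Integrable (fun q : ℝ × ℝ => Complex.exp (Complex.I * ((u * q.1 + v * q.2 : ℝ) : ℂ)) *
      ((h q : ℝ) : ℂ)) μ := by
  refine hh.ofReal.bdd_mul (c := 1) (Continuous.aestronglyMeasurable (by fun_prop))
    (.of_forall fun q => ?_)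
  rw [mul_comm, Complex.norm_exp_ofReal_mul_I]

lemma integrable_cos_mul {μ : Measure (ℝ × ℝ)} {h : ℝ × ℝ → ℝ} (hh : Integrable h μ) (u v : ℤ) :
    Integrable (fun q : ℝ × ℝ => cos (u * q.1 + v * q.2) * h q) μ :=
  hh.bdd_mul (c := 1) (Continuous.aestronglyMeasurable (by fun_prop))
    (.of_forall fun _ => abs_cos_le_one _)

lemma re_integral_character_mul {μ : Measure (ℝ × ℝ)} {h : ℝ × ℝ → ℝ} (hh : Integrable h μ)
    (u v : ℤ) :
    (∫ q, Complex.exp (Complex.I * ((u * q.1 + v * q.2 : ℝ) : ℂ)) * ((h q : ℝ) : ℂ) ∂μ).re =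
      ∫ q, cos (u * q.1 + v * q.2) * h q ∂μ := by
  have hre := integral_re (integrable_character hh u v)
  simp only [RCLike.re_eq_complex_re, Complex.re_mul_ofReal] at hre
  rw [← hre]
  simp only [mul_comm Complex.I, Complex.exp_ofReal_mul_I_re]

namespace SpectralDecomp

variable {ν νd : Measure (ℝ × ℝ)} {f : ℝ × ℝ → ℝ}

lemma isFiniteMeasure_discrete (hν : SpectralDecomp P X ν νd f) : IsFiniteMeasure νd :=
  have := hν.finite
  isFiniteMeasure_of_le ν (hν.decomp ▸ Measure.le_add_left le_rfl)

lemma integrableOn_density (hν : SpectralDecomp P X ν νd f) : IntegrableOn f specBox := by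
  refine ⟨hν.f_meas.aestronglyMeasurable, ?_⟩
  rw [hasFiniteIntegral_iff_ofReal (.of_forall hν.f_nonneg), ← setLIntegral_univ,
    ← withDensity_apply _ .univ]
  have := hν.finite
  have hle : (volume.restrict specBox).withDensity (fun q => ENNReal.ofReal (f q)) ≤ ν :=
    hν.decomp ▸ Measure.le_add_right le_rfl
  exact (hle _).trans_lt (measure_lt_top ν .univ)

lemma integral_mul_eq (hν : SpectralDecomp P X ν νd f) (u v : ℤ) :
    ∫ ω, X 0 0 ω * X u v ω ∂P =
      (∫ q in specBox, cos (u * q.1 + v * q.2) * f q) + ∫ q, cos (u * q.1 + v * q.2) ∂νd := by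
  have hfin := hν.finite
  have hcos (μ : Measure (ℝ × ℝ)) [IsFiniteMeasure μ] :
      Integrable (fun q : ℝ × ℝ => cos (u * q.1 + v * q.2)) μ := by
    simpa using integrable_cos_mul (integrable_const (1 : ℝ)) u v
  have hre := re_integral_character_mul (integrable_const (1 : ℝ) (μ := ν)) u v
  simp only [Complex.ofReal_one, mul_one, hν.herglotz, Complex.ofReal_re] at hre
  rw [hre]
  have hint := hcos ν
  rw [hν.decomp, integrable_add_measure] at hint
  rw [hν.decomp, integral_add_measure hint.1 hint.2,
    integral_withDensity_eq_integral_toReal_smul hν.f_meas.ennreal_ofReal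
      (.of_forall fun _ => ENNReal.ofReal_lt_top)]
  simp only [ENNReal.toReal_ofReal (hν.f_nonneg _), smul_eq_mul, mul_comm]

end SpectralDecomp

lemma HasSpecDensity.integral_mul_eq {h : ℝ × ℝ → ℝ} (hX : HasSpecDensity P X h)
    (hh : IntegrableOn h specBox) (u v : ℤ) :
    ∫ ω, X 0 0 ω * X u v ω ∂P = ∫ q in specBox, cos (u * q.1 + v * q.2) * h q := by
  rw [← re_integral_character_mul hh, hX, Complex.ofReal_re]

lemma setIntegral_cos_mul_symm {f : ℝ × ℝ → ℝ} (hf : IntegrableOn f specBox) (u v : ℤ) :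
    ∫ q in specBox, cos (u * q.1 + v * q.2) * ((f (q.1, q.2) + f (q.2, q.1)) / 2) =
      ((∫ q in specBox, cos (u * q.1 + v * q.2) * f q) +
        ∫ q in specBox, cos (v * q.1 + u * q.2) * f q) / 2 := by
  rw [← setIntegral_specBox_comp_swap fun q => cos (v * q.1 + u * q.2) * f q,
    ← integral_add (integrable_cos_mul hf u v), ← integral_div]
  · refine integral_congr_ae (.of_forall fun q => ?_)
    simp only [Prod.fst_swap, Prod.snd_swap, add_comm (v * q.2)]
    change _ * ((f q + f q.swap) / 2) = _
    ring
  · exact integrable_comp_swap_specBox (integrable_cos_mul hf v u)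

lemma SpectralDecomp.cov_add_cov_swap_eq {Ω' : Type*} [MeasurableSpace Ω'] {Q : Measure Ω'}
    {Y : ℤ → ℤ → Ω' → ℝ} {ν νd : Measure (ℝ × ℝ)} {f : ℝ × ℝ → ℝ}
    (hX : SpectralDecomp P X ν νd f)
    (hY : HasSpecDensity Q Y fun q => (f (q.1, q.2) + f (q.2, q.1)) / 2) (u v : ℤ) :
    ∫ ω, X 0 0 ω * X u v ω ∂P + ∫ ω, X 0 0 ω * X v u ω ∂P =
      ∫ ω, Y 0 0 ω * Y u v ω ∂Q + ∫ ω, Y 0 0 ω * Y v u ω ∂Q +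
        (∫ q, cos (u * q.1 + v * q.2) ∂νd + ∫ q, cos (v * q.1 + u * q.2) ∂νd) := by
  have hf := hX.integrableOn_density
  have hg : IntegrableOn (fun q : ℝ × ℝ => (f (q.1, q.2) + f (q.2, q.1)) / 2) specBox :=
    (hf.add (integrable_comp_swap_specBox hf)).div_const 2
  rw [hX.integral_mul_eq, hX.integral_mul_eq, hY.integral_mul_eq hg, hY.integral_mul_eq hg,
    setIntegral_cos_mul_symm hf, setIntegral_cos_mul_symm hf]
  ring

end SpectralSide

section Conclusion

variable {Ω Ω' : Type*} [MeasurableSpace Ω] [MeasurableSpace Ω'] {P : Measure Ω} {Q : Measure Ω'}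
  [IsProbabilityMeasure P] [IsProbabilityMeasure Q] {X : ℤ → ℤ → Ω → ℝ} {Y : ℤ → ℤ → Ω' → ℝ}

lemma tendsto_integral_cayleyMoment_scaledW_sub (hX : StatGauss P X) (hY : StatGauss Q Y)
    {ρ : Measure (ℝ × ℝ)} [IsFiniteMeasure ρ] (hρ : ∃ s : Set (ℝ × ℝ), s.Countable ∧ ρ sᶜ = 0)
    (hcov : ∀ u v : ℤ, ∫ ω, X 0 0 ω * X u v ω ∂P + ∫ ω, X 0 0 ω * X v u ω ∂P =
      ∫ ω, Y 0 0 ω * Y u v ω ∂Q + ∫ ω, Y 0 0 ω * Y v u ω ∂Q +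
        (∫ q, cos (u * q.1 + v * q.2) ∂ρ + ∫ q, cos (v * q.1 + u * q.2) ∂ρ)) (k : ℕ) :
    Tendsto (fun N => ∫ ω, cayleyMoment k (scaledW X N ω) ∂P -
      ∫ ω, cayleyMoment k (scaledW Y N ω) ∂Q) atTop (nhds 0) := by
  have hsplit := hX.hasStationaryCov.secondMoment_scaledWVec_eq_add hY.hasStationaryCov
    (hasStationaryCov_phasedCosine ρ) hcov
  simp only [hX.integral_cayleyMoment_scaledW, hY.integral_cayleyMoment_scaledW, hsplit]
  refine tendsto_gaussianCayleyMoment_add_secondMoment_sub k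
    (exists_countable_quadraturePhases_compl_eq_zero hρ)
    (fun N => ((hasStationaryCov_phasedCosine ρ).memLp_scaledWVec N).aestronglyMeasurable)
    norm_sq_scaledWVec_phasedCosine_le (r := 4) (fun N θ => ?_)
    fun N => posSemidef_secondMoment (hY.hasStationaryCov.memLp_scaledWVec N)
  rw [symmPart_scaledWVec]
  exact rank_scaledW_phasedCosine_le N θ

end Conclusion

/-- **Lemma 3.6.** The limiting spectral distribution is unchanged when the
density `f` is replaced by its symmetrization
`g(x,y) = (f(x,y) + f(y,x))/2`. -/
theorem statement12 {Ω : Type} [MeasurableSpace Ω] (P : Measure Ω)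
    [IsProbabilityMeasure P] (X : ℤ → ℤ → Ω → ℝ) (ν νd : Measure (ℝ × ℝ))
    (f : ℝ × ℝ → ℝ) (hX : StatGauss P X) (hν : SpectralDecomp P X ν νd f)
    (μf : Measure ℝ) (hμf : IsProbabilityMeasure μf)
    (hconvf : ESDTendstoInProb P (scaledW X) μf)
    (μg : Measure ℝ) (hμg : IsProbabilityMeasure μg)
    (hg : IsLSDofDensity (fun q => (f (q.1, q.2) + f (q.2, q.1)) / 2) μg) :
    μf = μg := by
  obtain ⟨Ω', mΩ', Q, hQ, Y, hY, hspec, hconvg⟩ := hg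
  have := hν.isFiniteMeasure_discrete
  refine ext_of_integral_pow_eq cayleyBCF_mem_unitary cayleyBCF_injective fun k => ?_
  have hlimX := hconvf.tendsto_integral_cayleyMoment (fun N ω => isSymm_scaledW X N ω)
    (measurable_cayleyMoment_scaledW hX.meas k)
  have hlimY := hconvg.tendsto_integral_cayleyMoment (fun N ω => isSymm_scaledW Y N ω)
    (measurable_cayleyMoment_scaledW hY.meas k)
  have hdiff := tendsto_integral_cayleyMoment_scaledW_sub hX hY hν.discrete
    (hν.cov_add_cov_swap_eq hspec) k
  exact sub_eq_zero.mp (tendsto_nhds_unique (hlimX.sub hlimY) hdiff)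

end
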